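/- The infinite series identity 10·2^{1/3} = Σ_{k=0}^{∞} (-1/4)^k · [(1/12)_k (7/12)_k (2/3)_k] / [(11/12)_k (1)_k (17/12)_k] · (60k + 13) holds, where 2^{1/3} denotes the real cube root of 2, the sum is over natural numbers k, and all quantities are real numbers. -/

import Mathlib

noncomputable def risingFactorial (a : ℝ) (k : ℕ) : ℝ := ∏ i ∈ Finset.range k, (a + i)

/-!
Gauss's theorem evaluates `∑ₖ (a)ₖ (b)ₖ / ((1)ₖ (c)ₖ)` as `Γ(c) Γ(c - a - b) / (Γ(c - a) Γ(c - b))`: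
iterate the contiguous relation between the sums at `c` and `c + 1`, and note that the sum at
`c + N` tends to `1` as `N → ∞`. For `a = 1/3`, `b = 1/6`, `c = 5/6` the value is `2^(1/3)` by
Legendre's duplication formula.

The summand is the row `n = 0` of a Wilf–Zeilberger pair `(F, G)`, so that
`∑ₖ F(n, k) - ∑ₖ F(n + 1, k) = G(n, 0)`. The row sums decay geometrically, hence `∑ₙ G(n, 0)` is
the Gauss sum again; at the parameters above its terms are one tenth of the terms of the stated
series.
-/

open Filter Topology Asymptotics

section Telescoping

variable {E : Type*} [AddCommGroup E] [TopologicalSpace E] [IsTopologicalAddGroup E] [T2Space E]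

lemma hasSum_sub_of_tendsto {u : ℕ → E} {l : E} (hs : Summable fun k => u (k + 1) - u k)
    (hu : Tendsto u atTop (𝓝 l)) : HasSum (fun k => u (k + 1) - u k) (l - u 0) := by
  rw [hs.hasSum_iff_tendsto_nat]
  simpa only [Finset.sum_range_sub] using hu.sub_const (u 0)

theorem hasSum_of_wilfZeilberger {F G : ℕ → ℕ → E}
    (hFG : ∀ n k, F (n + 1) k - F n k = G n (k + 1) - G n k) (hF : ∀ n, Summable (F n))
    (hG : ∀ n, Tendsto (G n) atTop (𝓝 0)) (hS : Summable fun n => ∑' k, F n k) :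
    HasSum (fun n => G n 0) (∑' k, F 0 k) := by
  have row_diff (n : ℕ) : G n 0 = ∑' k, F n k - ∑' k, F (n + 1) k := by
    have hsub := (hF (n + 1)).hasSum.sub (hF n).hasSum
    simp only [hFG] at hsub
    have := hsub.unique (hasSum_sub_of_tendsto hsub.summable (hG n))
    rw [← neg_inj, neg_sub, this, zero_sub]
  simpa [row_diff] using hS.hasSum.sub ((hasSum_nat_add_iff' 1).2 hS.hasSum)

end Telescoping

section RisingFactorial

lemma ne_neg_natCast_of_pos {a : ℝ} (ha : 0 < a) (m : ℕ) : a ≠ -m :=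
  ((neg_nonpos.2 m.cast_nonneg).trans_lt ha).ne'

lemma add_natCast_ne_neg_natCast {a : ℝ} (ha : ∀ m : ℕ, a ≠ -m) (N m : ℕ) : a + N ≠ -m := by
  have := ha (N + m)
  contrapose! this
  push_cast
  linarith

lemma risingFactorial_zero (a : ℝ) : risingFactorial a 0 = 1 :=
  Finset.prod_range_zero _

lemma risingFactorial_succ (a : ℝ) (k : ℕ) :
    risingFactorial a (k + 1) = risingFactorial a k * (a + k) :=
  Finset.prod_range_succ _ _

lemma risingFactorial_pos {a : ℝ} (ha : 0 < a) (k : ℕ) : 0 < risingFactorial a k :=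
  Finset.prod_pos fun _ _ => by positivity

lemma risingFactorial_ne_zero {a : ℝ} (ha : ∀ m : ℕ, a ≠ -m) (k : ℕ) : risingFactorial a k ≠ 0 :=
  Finset.prod_ne_zero_iff.2 fun i _ => by simpa only [ne_eq, add_eq_zero_iff_eq_neg] using ha i

lemma risingFactorial_neg_natCast {m k : ℕ} (h : m < k) : risingFactorial (-m) k = 0 :=
  Finset.prod_eq_zero (Finset.mem_range.2 h) (neg_add_cancel _)

lemma risingFactorial_le {a b : ℝ} (ha : 0 ≤ a) (hab : a ≤ b) (k : ℕ) :
    risingFactorial a k ≤ risingFactorial b k :=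
  Finset.prod_le_prod (fun _ _ => by positivity) fun _ _ => by gcongr

lemma mul_risingFactorial_add_one (a : ℝ) (k : ℕ) :
    a * risingFactorial (a + 1) k = risingFactorial a k * (a + k) := by
  rw [← risingFactorial_succ, risingFactorial, risingFactorial, Finset.prod_range_succ', mul_comm]
  simp only [Nat.cast_add_one, Nat.cast_zero, add_zero, add_assoc, add_comm (1 : ℝ)]

lemma risingFactorial_two_mul (a : ℝ) (k : ℕ) :
    risingFactorial a (2 * k) =
      4 ^ k * risingFactorial (a / 2) k * risingFactorial ((a + 1) / 2) k := by
  induction k with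
  | zero => simp [risingFactorial_zero]
  | succ k ih =>
    rw [Nat.mul_succ, risingFactorial_succ, risingFactorial_succ, ih, risingFactorial_succ,
      risingFactorial_succ]
    push_cast
    ring

lemma tendsto_risingFactorial_div_inv_Gamma (a : ℝ) :
    Tendsto (fun n : ℕ => risingFactorial a (n + 1) / ((n : ℝ) ^ a * n.factorial)) atTop
      (𝓝 (Real.Gamma a)⁻¹) := by
  by_cases hΓ : Real.Gamma a = 0
  · obtain ⟨m, rfl⟩ := (Real.Gamma_eq_zero_iff a).1 hΓ
    rw [hΓ, inv_zero]
    refine tendsto_const_nhds.congr' ?_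
    filter_upwards [eventually_ge_atTop m] with n hn
    rw [risingFactorial_neg_natCast (Nat.lt_succ_of_le hn), zero_div]
  · refine ((Real.GammaSeq_tendsto_Gamma a).inv₀ hΓ).congr fun n => ?_
    rw [Real.GammaSeq, inv_div, risingFactorial]

theorem tendsto_rpow_mul_risingFactorial_ratio (a b : ℝ) {c d : ℝ} (hc : ∀ m : ℕ, c ≠ -m)
    (hd : ∀ m : ℕ, d ≠ -m) :
    Tendsto (fun n : ℕ => (n : ℝ) ^ (c + d - a - b) *
        (risingFactorial a (n + 1) * risingFactorial b (n + 1) /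
          (risingFactorial c (n + 1) * risingFactorial d (n + 1)))) atTop
      (𝓝 (Real.Gamma c * Real.Gamma d / (Real.Gamma a * Real.Gamma b))) := by
  have hden : (Real.Gamma c)⁻¹ * (Real.Gamma d)⁻¹ ≠ 0 :=
    mul_ne_zero (inv_ne_zero (Real.Gamma_ne_zero hc)) (inv_ne_zero (Real.Gamma_ne_zero hd))
  have key := ((tendsto_risingFactorial_div_inv_Gamma a).mul
    (tendsto_risingFactorial_div_inv_Gamma b)).div ((tendsto_risingFactorial_div_inv_Gamma c).mul
      (tendsto_risingFactorial_div_inv_Gamma d)) hden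
  rw [← mul_inv, ← mul_inv, inv_div_inv] at key
  refine key.congr' ?_
  filter_upwards [eventually_gt_atTop 0] with n hn
  have hn' : (0 : ℝ) < n := Nat.cast_pos.2 hn
  have hc' := risingFactorial_ne_zero hc (n + 1)
  have hd' := risingFactorial_ne_zero hd (n + 1)
  simp only [Pi.div_apply, Real.rpow_sub hn', Real.rpow_add hn']
  field_simp

end RisingFactorial

section GaussSum

/-- The `k`-th term `(a)ₖ (b)ₖ / (k! (c)ₖ)` of the hypergeometric series `₂F₁(a, b; c; 1)`,
with `k!` written as `(1)ₖ`. -/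
noncomputable def gaussTerm (a b c : ℝ) (k : ℕ) : ℝ :=
  risingFactorial a k * risingFactorial b k / (risingFactorial 1 k * risingFactorial c k)

variable {a b c : ℝ}

lemma gaussTerm_zero (a b c : ℝ) : gaussTerm a b c 0 = 1 := by
  simp [gaussTerm, risingFactorial_zero]

lemma gaussTerm_succ (a b c : ℝ) (k : ℕ) :
    gaussTerm a b c (k + 1) = gaussTerm a b c k * ((a + k) * (b + k) / ((1 + k) * (c + k))) := by
  simp only [gaussTerm, risingFactorial_succ, div_eq_mul_inv, mul_inv]
  ring

lemma gaussTerm_pos (ha : 0 < a) (hb : 0 < b) (hc : 0 < c) (k : ℕ) : 0 < gaussTerm a b c k :=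
  div_pos (mul_pos (risingFactorial_pos ha k) (risingFactorial_pos hb k))
    (mul_pos (risingFactorial_pos one_pos k) (risingFactorial_pos hc k))

lemma gaussTerm_add_one (a b : ℝ) (hc : ∀ m : ℕ, c ≠ -m) (k : ℕ) :
    gaussTerm a b (c + 1) k = gaussTerm a b c k * (c / (c + k)) := by
  have hc0 : c ≠ 0 := by simpa using hc 0
  have hck : c + k ≠ 0 := by simpa only [ne_eq, add_eq_zero_iff_eq_neg] using hc k
  have hshift : risingFactorial (c + 1) k = risingFactorial c k * (c + k) / c := by
    rw [← mul_risingFactorial_add_one, mul_div_cancel_left₀ _ hc0]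
  have := risingFactorial_ne_zero hc k
  rw [gaussTerm, gaussTerm, hshift]
  field_simp

lemma abs_gaussTerm_le (a b : ℝ) {c c' : ℝ} (hc : 0 < c) (hcc' : c ≤ c') (k : ℕ) :
    |gaussTerm a b c' k| ≤ |gaussTerm a b c k| := by
  have h1 := risingFactorial_pos one_pos k
  have hck := risingFactorial_pos hc k
  have hle := risingFactorial_le hc.le hcc' k
  rw [gaussTerm, gaussTerm, abs_div, abs_div, abs_of_pos (mul_pos h1 hck),
    abs_of_pos (mul_pos h1 (hck.trans_le hle))]
  gcongr

lemma gaussTerm_succ_isBigO (a b : ℝ) (hc : ∀ m : ℕ, c ≠ -m) :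
    (fun n : ℕ => gaussTerm a b c (n + 1)) =O[atTop] fun n : ℕ => (n : ℝ) ^ (a + b - c - 1) := by
  have hbounded := (tendsto_rpow_mul_risingFactorial_ratio a b
    (ne_neg_natCast_of_pos one_pos) hc).isBigO_one ℝ
  refine ((isBigO_refl (fun n : ℕ => (n : ℝ) ^ (a + b - c - 1)) atTop).mul hbounded).congr' ?_ ?_
  · filter_upwards [eventually_gt_atTop 0] with n hn
    rw [← mul_assoc, ← Real.rpow_add (Nat.cast_pos.2 hn),
      show a + b - c - 1 + (1 + c - a - b) = 0 by ring, Real.rpow_zero, one_mul, gaussTerm]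
  · simp

lemma summable_gaussTerm (hc : ∀ m : ℕ, c ≠ -m) (habc : a + b < c) :
    Summable (gaussTerm a b c) := by
  rw [← summable_nat_add_iff 1]
  exact summable_of_isBigO_nat (Real.summable_nat_rpow.2 (by linarith))
    (gaussTerm_succ_isBigO a b hc)

lemma tendsto_mul_gaussTerm (hc : ∀ m : ℕ, c ≠ -m) (habc : a + b < c) :
    Tendsto (fun k : ℕ => k * gaussTerm a b c k) atTop (𝓝 0) := by
  rw [← tendsto_add_atTop_iff_nat 1]
  have hsucc : (fun n : ℕ => ((n + 1 : ℕ) : ℝ)) =O[atTop] fun n : ℕ => (n : ℝ) := by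
    refine IsBigO.of_bound 2 ?_
    filter_upwards [eventually_ge_atTop 1] with n hn
    have : (1 : ℝ) ≤ n := Nat.one_le_cast.2 hn
    rw [RCLike.norm_natCast, RCLike.norm_natCast]
    push_cast
    linarith
  have hdecay : Tendsto (fun n : ℕ => (n : ℝ) ^ (-(c - a - b))) atTop (𝓝 0) :=
    (tendsto_rpow_neg_atTop (by linarith)).comp tendsto_natCast_atTop_atTop
  refine ((hsucc.mul (gaussTerm_succ_isBigO a b hc)).congr_right fun n => ?_).trans_tendsto hdecay
  rw [← Real.rpow_one_add' n.cast_nonneg (by linarith)]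
  ring_nf

lemma gaussTerm_contiguous (a b : ℝ) (hc : ∀ m : ℕ, c ≠ -m) (k : ℕ) :
    (c - a) * (c - b) / c * gaussTerm a b (c + 1) k - (c - a - b) * gaussTerm a b c k =
      (k + 1 : ℕ) * gaussTerm a b c (k + 1) - k * gaussTerm a b c k := by
  have hc0 : c ≠ 0 := by simpa using hc 0
  have hck : c + k ≠ 0 := by simpa only [ne_eq, add_eq_zero_iff_eq_neg] using hc k
  rw [gaussTerm_add_one a b hc, gaussTerm_succ]
  push_cast
  field_simp
  ring

lemma tsum_gaussTerm_add_one (hc : ∀ m : ℕ, c ≠ -m) (habc : a + b < c) :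
    c * (c - a - b) * ∑' k, gaussTerm a b c k =
      (c - a) * (c - b) * ∑' k, gaussTerm a b (c + 1) k := by
  have hc0 : c ≠ 0 := by simpa using hc 0
  have hc1 (m : ℕ) : c + 1 ≠ -m := by exact_mod_cast add_natCast_ne_neg_natCast hc 1 m
  have habc1 : a + b < c + 1 := by linarith
  have hsum := ((summable_gaussTerm hc1 habc1).hasSum.mul_left ((c - a) * (c - b) / c)).sub
    ((summable_gaussTerm hc habc).hasSum.mul_left (c - a - b))
  simp only [gaussTerm_contiguous a b hc] at hsum
  have htelescope := hsum.unique <| hasSum_sub_of_tendsto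
    (u := fun k : ℕ => k * gaussTerm a b c k) hsum.summable (tendsto_mul_gaussTerm hc habc)
  rw [Nat.cast_zero, zero_mul, sub_zero, sub_eq_zero] at htelescope
  rw [mul_assoc, ← htelescope, ← mul_assoc, mul_div_cancel₀ _ hc0]

lemma tsum_gaussTerm_add_natCast (hc : ∀ m : ℕ, c ≠ -m) (habc : a + b < c) (N : ℕ) :
    risingFactorial c N * risingFactorial (c - a - b) N * ∑' k, gaussTerm a b c k =
      risingFactorial (c - a) N * risingFactorial (c - b) N * ∑' k, gaussTerm a b (c + N) k := by
  induction N with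
  | zero => simp [risingFactorial_zero]
  | succ N ih =>
    have hstep := tsum_gaussTerm_add_one (a := a) (b := b) (add_natCast_ne_neg_natCast hc N)
      (by linarith)
    simp only [risingFactorial_succ, Nat.cast_succ, ← add_assoc]
    linear_combination (c + N) * (c - a - b + N) * ih +
      risingFactorial (c - a) N * risingFactorial (c - b) N * hstep

lemma tendsto_gaussTerm_add_natCast (a b c : ℝ) (k : ℕ) :
    Tendsto (fun N : ℕ => gaussTerm a b (c + N) k) atTop (𝓝 (if k = 0 then 1 else 0)) := by
  induction k with
  | zero => simp [gaussTerm_zero]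
  | succ k ih =>
    have hden : Tendsto (fun N : ℕ => (1 + (k : ℝ)) * (c + N + k)) atTop atTop :=
      (tendsto_atTop_add_const_right _ _ (tendsto_atTop_add_const_left _ _
        tendsto_natCast_atTop_atTop)).const_mul_atTop (by positivity)
    simpa [gaussTerm_succ] using ih.mul (hden.const_div_atTop ((a + k) * (b + k)))

lemma tendsto_tsum_gaussTerm_add_natCast (a b c : ℝ) :
    Tendsto (fun N : ℕ => ∑' k, gaussTerm a b (c + N) k) atTop (𝓝 1) := by
  obtain ⟨M, hM⟩ := exists_nat_gt (max (-c) (a + b - c))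
  obtain ⟨hcM, habM⟩ := max_lt_iff.1 hM
  have hpos : 0 < c + M := by linarith
  have hsum : Summable (gaussTerm a b (c + M)) :=
    summable_gaussTerm (ne_neg_natCast_of_pos hpos) (by linarith)
  rw [← tsum_ite_eq (0 : ℕ) fun _ => (1 : ℝ)]
  refine tendsto_tsum_of_dominated_convergence hsum.abs (tendsto_gaussTerm_add_natCast a b c) ?_
  filter_upwards [eventually_ge_atTop M] with N hN k
  exact abs_gaussTerm_le a b hpos (by gcongr) k

theorem tsum_gaussTerm (hc : ∀ m : ℕ, c ≠ -m) (habc : a + b < c) :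
    ∑' k, gaussTerm a b c k =
      Real.Gamma c * Real.Gamma (c - a - b) / (Real.Gamma (c - a) * Real.Gamma (c - b)) := by
  have hd : ∀ m : ℕ, c - a - b ≠ -m := ne_neg_natCast_of_pos (by linarith)
  have hratio := tendsto_rpow_mul_risingFactorial_ratio (c - a) (c - b) hc hd
  have htail := (tendsto_add_atTop_iff_nat 1).2 (tendsto_tsum_gaussTerm_add_natCast a b c)
  have hlim := hratio.mul htail
  rw [mul_one] at hlim
  refine tendsto_nhds_unique (tendsto_const_nhds.congr fun N => ?_) hlim
  have hcN := risingFactorial_ne_zero hc (N + 1)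
  have hdN := risingFactorial_ne_zero hd (N + 1)
  rw [show c + (c - a - b) - (c - a) - (c - b) = 0 by ring, Real.rpow_zero, one_mul,
    div_mul_eq_mul_div, eq_div_iff (mul_ne_zero hcN hdN),
    ← tsum_gaussTerm_add_natCast hc habc, mul_comm]

lemma summable_pow_mul_gaussTerm (a b c : ℝ) {x : ℝ} (hx : |x| < 1) :
    Summable fun k => x ^ k * gaussTerm a b c k := by
  obtain ⟨r, hxr, hr⟩ := exists_between hx
  have hratio : Tendsto (fun k : ℕ => |x * ((a + k) / (1 + k) * ((b + k) / (c + k)))|) atTop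
      (𝓝 |x|) := by
    have h (p q : ℝ) : Tendsto (fun k : ℕ => (p + k) / (q + k)) atTop (𝓝 1) := by
      simpa using tendsto_add_mul_div_add_mul_atTop_nhds p q 1 one_ne_zero
    simpa using (((h a 1).mul (h b c)).const_mul x).abs
  refine summable_of_ratio_norm_eventually_le hr ?_
  filter_upwards [hratio.eventually_le_const hxr] with k hk
  calc ‖x ^ (k + 1) * gaussTerm a b c (k + 1)‖
      = |x * ((a + k) / (1 + k) * ((b + k) / (c + k)))| * ‖x ^ k * gaussTerm a b c k‖ := by
        rw [← Real.norm_eq_abs, ← norm_mul, gaussTerm_succ, pow_succ, div_mul_div_comm]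
        ring_nf
    _ ≤ r * ‖x ^ k * gaussTerm a b c k‖ := by gcongr

end GaussSum

section WilfZeilberger

/-- The Wilf–Zeilberger function `F(n, k)` that accelerates `₂F₁(a, b; c; 1)`: its row `n = 0` is
`gaussTerm a b c`. -/
noncomputable def gaussWZ (a b c : ℝ) (n k : ℕ) : ℝ :=
  (-1) ^ n * (risingFactorial a (k + n) * risingFactorial b (k + 2 * n) /
      (risingFactorial 1 (k + 2 * n) * risingFactorial c (k + 2 * n))) *
    (risingFactorial (1 - a) n * risingFactorial (c - a) n / risingFactorial (c - a - b) n)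

/-- The rational certificate `R(n, k)` of `gaussWZ`: the Wilf–Zeilberger mate of `F` is
`G(n, k) = F(n, k) R(n, k)`. -/
noncomputable def gaussWZCert (a b c : ℝ) (n k : ℕ) : ℝ :=
  (k + 3 * n + c - a - (1 - a + n) * (c - a + n) *
    ((b + k + 2 * n) / ((1 + k + 2 * n) * (c + k + 2 * n)))) / (c - a - b + n)

variable {a b c : ℝ}

lemma gaussWZ_zero_left (a b c : ℝ) : gaussWZ a b c 0 = gaussTerm a b c := by
  ext k
  simp [gaussWZ, gaussTerm, risingFactorial_zero]

lemma gaussWZ_succ_left (a b c : ℝ) (n k : ℕ) :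
    gaussWZ a b c (n + 1) k = gaussWZ a b c n k *
      -((a + k + n) * (b + k + 2 * n) * (b + k + 2 * n + 1) * (1 - a + n) * (c - a + n) /
        ((1 + k + 2 * n) * (2 + k + 2 * n) * (c + k + 2 * n) * (c + k + 2 * n + 1) *
          (c - a - b + n))) := by
  rw [gaussWZ, gaussWZ, show k + (n + 1) = k + n + 1 by ring,
    show k + 2 * (n + 1) = k + 2 * n + 1 + 1 by ring]
  simp only [risingFactorial_succ, div_eq_mul_inv, mul_inv]
  push_cast
  ring

lemma gaussWZ_succ_right (a b c : ℝ) (n k : ℕ) :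
    gaussWZ a b c n (k + 1) = gaussWZ a b c n k *
      ((a + k + n) * (b + k + 2 * n) / ((1 + k + 2 * n) * (c + k + 2 * n))) := by
  simp only [gaussWZ, add_right_comm k 1, risingFactorial_succ, div_eq_mul_inv, mul_inv]
  push_cast
  ring

lemma gaussWZ_succ_sub (hc : 0 < c) (habc : a + b < c) (n k : ℕ) :
    gaussWZ a b c (n + 1) k - gaussWZ a b c n k =
      gaussWZ a b c n (k + 1) * gaussWZCert a b c n (k + 1) -
        gaussWZ a b c n k * gaussWZCert a b c n k := by
  have hd : 0 < c - a - b + n := by linarith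
  rw [gaussWZ_succ_left, gaussWZ_succ_right, gaussWZCert, gaussWZCert]
  push_cast
  rw [show c + ((k : ℝ) + 1) + 2 * n = c + k + 2 * n + 1 by ring,
    show 1 + ((k : ℝ) + 1) + 2 * n = 2 + k + 2 * n by ring]
  field_simp
  ring

lemma abs_gaussWZ_succ_le (ha : 0 < a) (ha1 : a < 1) (hb : 0 < b) (habc : a + b < c) (n k : ℕ) :
    |gaussWZ a b c (n + 1) k| ≤ |gaussWZ a b c n k| *
      (1 / 2 * ((1 - a + n) * (c - a + n) / ((1 + n) * (c - a - b + n)))) := by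
  have hc : 0 < c := by linarith
  have h1a : 0 < 1 - a + n := by linarith
  have hca : 0 < c - a + n := by linarith
  have hcab : 0 < c - a - b + n := by linarith
  rw [gaussWZ_succ_left, abs_mul, abs_neg]
  refine mul_le_mul_of_nonneg_left ?_ (abs_nonneg _)
  rw [abs_of_pos (by positivity)]
  calc (a + k + n) * (b + k + 2 * n) * (b + k + 2 * n + 1) * (1 - a + n) * (c - a + n) /
        ((1 + k + 2 * n) * (2 + k + 2 * n) * (c + k + 2 * n) * (c + k + 2 * n + 1) *
          (c - a - b + n))
      = (a + k + n) / (1 + k + 2 * n) * ((b + k + 2 * n) / (c + k + 2 * n)) *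
          ((b + k + 2 * n + 1) / (c + k + 2 * n + 1)) *
          ((1 - a + n) * (c - a + n) / ((2 + k + 2 * n) * (c - a - b + n))) := by
        field_simp
    _ ≤ 1 * 1 * 1 * ((1 - a + n) * (c - a + n) / ((2 * (1 + n)) * (c - a - b + n))) := by
        gcongr
        · exact div_le_one_of_le₀ (by linarith) (by positivity)
        · exact div_le_one_of_le₀ (by linarith) (by positivity)
        · exact div_le_one_of_le₀ (by linarith) (by positivity)
        · linarith
    _ = 1 / 2 * ((1 - a + n) * (c - a + n) / ((1 + n) * (c - a - b + n))) := by
        field_simp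

lemma abs_gaussWZ_le (ha : 0 < a) (ha1 : a < 1) (hb : 0 < b) (habc : a + b < c) (n k : ℕ) :
    |gaussWZ a b c n k| ≤
      (1 / 2) ^ n * gaussTerm (1 - a) (c - a) (c - a - b) n * gaussTerm a b c k := by
  induction n with
  | zero =>
    rw [gaussWZ_zero_left, gaussTerm_zero, pow_zero, one_mul, one_mul,
      abs_of_pos (gaussTerm_pos ha hb (by linarith) k)]
  | succ n ih =>
    have hca : 0 < c - a + n := by linarith
    have hcab : 0 < c - a - b + n := by linarith
    refine (abs_gaussWZ_succ_le ha ha1 hb habc n k).trans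
      ((mul_le_mul_of_nonneg_right ih (by positivity)).trans_eq ?_)
    rw [gaussTerm_succ, pow_succ]
    ring

lemma summable_gaussWZ (ha : 0 < a) (ha1 : a < 1) (hb : 0 < b) (habc : a + b < c) (n : ℕ) :
    Summable (gaussWZ a b c n) :=
  .of_norm_bounded ((summable_gaussTerm (ne_neg_natCast_of_pos (by linarith)) habc).mul_left _)
    (abs_gaussWZ_le ha ha1 hb habc n)

lemma summable_tsum_gaussWZ (ha : 0 < a) (ha1 : a < 1) (hb : 0 < b) (habc : a + b < c) :
    Summable fun n => ∑' k, gaussWZ a b c n k := by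
  have hsum : Summable (gaussTerm a b c) :=
    summable_gaussTerm (ne_neg_natCast_of_pos (by linarith)) habc
  refine .of_norm_bounded ((summable_pow_mul_gaussTerm (1 - a) (c - a) (c - a - b)
    (by norm_num : |(1 / 2 : ℝ)| < 1)).mul_right (∑' k, gaussTerm a b c k)) fun n => ?_
  exact tsum_of_norm_bounded (hsum.hasSum.mul_left _) (abs_gaussWZ_le ha ha1 hb habc n)

lemma gaussWZCert_isBigO (a b c : ℝ) (n : ℕ) :
    gaussWZCert a b c n =O[atTop] fun k : ℕ => (k : ℝ) := by
  have hq : Tendsto (fun k : ℕ => (b + k + 2 * n) / ((1 + k + 2 * n) * (c + k + 2 * n))) atTop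
      (𝓝 0) := by
    have hone := tendsto_add_mul_div_add_mul_atTop_nhds (b + 2 * n) (1 + 2 * n) 1 one_ne_zero
    have hinv := tendsto_inv_atTop_zero.comp (tendsto_atTop_add_const_left _ (c + 2 * n)
      (tendsto_natCast_atTop_atTop (R := ℝ)))
    refine (mul_zero (1 / 1 : ℝ) ▸ hone.mul hinv).congr fun k => ?_
    simp only [Function.comp_apply, ← div_eq_mul_inv, div_div, one_mul,
      add_right_comm _ (2 * (n : ℝ))]
  have hconst (C : ℝ) : (fun _ : ℕ => C) =O[atTop] fun k : ℕ => (k : ℝ) :=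
    (isLittleO_const_left.2 <| .inr <|
      tendsto_norm_atTop_atTop.comp tendsto_natCast_atTop_atTop).isBigO
  have hlinear := (isBigO_refl (fun k : ℕ => (k : ℝ)) atTop).add (hconst (3 * n + c - a))
  have hrational := ((hq.isBigO_one ℝ).trans (hconst 1)).const_mul_left
    ((1 - a + n) * (c - a + n))
  refine ((hlinear.sub hrational).const_mul_left (c - a - b + n)⁻¹).congr_left fun k => ?_
  rw [gaussWZCert]
  ring

lemma tendsto_gaussWZ_mul_cert (ha : 0 < a) (ha1 : a < 1) (hb : 0 < b) (habc : a + b < c)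
    (n : ℕ) :
    Tendsto (fun k => gaussWZ a b c n k * gaussWZCert a b c n k) atTop (𝓝 0) := by
  have hF : gaussWZ a b c n =O[atTop] gaussTerm a b c :=
    .of_bound ((1 / 2) ^ n * gaussTerm (1 - a) (c - a) (c - a - b) n) <| .of_forall fun k => by
      rw [Real.norm_of_nonneg (gaussTerm_pos ha hb (by linarith) k).le]
      exact abs_gaussWZ_le ha ha1 hb habc n k
  simpa only [mul_comm] using ((gaussWZCert_isBigO a b c n).mul hF).trans_tendsto
    (tendsto_mul_gaussTerm (ne_neg_natCast_of_pos (by linarith)) habc)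

theorem hasSum_gaussWZ_mul_cert (ha : 0 < a) (ha1 : a < 1) (hb : 0 < b) (habc : a + b < c) :
    HasSum (fun n => gaussWZ a b c n 0 * gaussWZCert a b c n 0)
      (Real.Gamma c * Real.Gamma (c - a - b) / (Real.Gamma (c - a) * Real.Gamma (c - b))) := by
  have hc : 0 < c := by linarith
  rw [← tsum_gaussTerm (ne_neg_natCast_of_pos hc) habc, ← gaussWZ_zero_left]
  exact hasSum_of_wilfZeilberger (gaussWZ_succ_sub hc habc) (summable_gaussWZ ha ha1 hb habc)
    (tendsto_gaussWZ_mul_cert ha ha1 hb habc) (summable_tsum_gaussWZ ha ha1 hb habc)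

end WilfZeilberger

lemma Gamma_add_half_mul_Gamma_div {s : ℝ} (hs : 0 < s) :
    Real.Gamma (s + 1 / 2) * Real.Gamma s / (Real.Gamma (1 / 2) * Real.Gamma (2 * s)) =
      2 ^ (1 - 2 * s) := by
  have hΓ : Real.Gamma (2 * s) ≠ 0 := (Real.Gamma_pos_of_pos (by positivity)).ne'
  have hπ : √Real.pi ≠ 0 := (Real.sqrt_pos.2 Real.pi_pos).ne'
  rw [mul_comm (Real.Gamma (s + 1 / 2)), Real.Gamma_mul_Gamma_add_half, Real.Gamma_one_half_eq]
  field_simp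

lemma gaussWZ_third_sixth (n : ℕ) :
    gaussWZ (1 / 3) (1 / 6) (5 / 6) n 0 =
      (-1 / 4) ^ n * (risingFactorial (1 / 12) n * risingFactorial (7 / 12) n *
          risingFactorial (2 / 3) n) /
        (risingFactorial (11 / 12) n * risingFactorial 1 n * risingFactorial (5 / 12) n) := by
  have h1 := (risingFactorial_pos one_pos n).ne'
  have h12 := (risingFactorial_pos (one_half_pos (α := ℝ)) n).ne'
  have h13 := (risingFactorial_pos (show (0 : ℝ) < 1 / 3 by norm_num) n).ne'
  have h512 := (risingFactorial_pos (show (0 : ℝ) < 5 / 12 by norm_num) n).ne'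
  have h1112 := (risingFactorial_pos (show (0 : ℝ) < 11 / 12 by norm_num) n).ne'
  rw [gaussWZ, zero_add, zero_add, risingFactorial_two_mul, risingFactorial_two_mul,
    risingFactorial_two_mul, neg_div, neg_pow (1 / 4 : ℝ), one_div_pow]
  norm_num only
  field_simp

lemma gaussWZCert_third_sixth (n : ℕ) :
    gaussWZCert (1 / 3) (1 / 6) (5 / 6) n 0 = (60 * n + 13) / (24 * (5 / 12 + n)) := by
  rw [gaussWZCert]
  push_cast
  field_simp
  ring

lemma ten_mul_gaussWZ_mul_cert (n : ℕ) :
    10 * (gaussWZ (1 / 3) (1 / 6) (5 / 6) n 0 * gaussWZCert (1 / 3) (1 / 6) (5 / 6) n 0) =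
      (-1 / 4) ^ n * (risingFactorial (1 / 12) n * risingFactorial (7 / 12) n *
          risingFactorial (2 / 3) n) /
        (risingFactorial (11 / 12) n * risingFactorial 1 n * risingFactorial (17 / 12) n) *
        (60 * n + 13) := by
  have hshift : risingFactorial (17 / 12) n =
      risingFactorial (5 / 12) n * (5 / 12 + n) / (5 / 12) := by
    rw [← mul_risingFactorial_add_one]
    norm_num
  rw [gaussWZ_third_sixth, gaussWZCert_third_sixth, hshift]
  simp only [div_eq_mul_inv, mul_inv]
  ring

theorem stmt_6 :
    10 * (2 : ℝ) ^ ((1 : ℝ)/3) =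
      ∑' k : ℕ, (-1/4 : ℝ) ^ k * (risingFactorial (1/12) k * risingFactorial (7/12) k * risingFactorial (2/3) k) /
        (risingFactorial (11/12) k * risingFactorial (1) k * risingFactorial (17/12) k) * (60 * (k:ℝ) + 13) := by
  have hsum := hasSum_gaussWZ_mul_cert (a := 1 / 3) (b := 1 / 6) (c := 5 / 6)
    (by norm_num) (by norm_num) (by norm_num) (by norm_num)
  have hΓ := Gamma_add_half_mul_Gamma_div (s := 1 / 3) (by norm_num)
  norm_num only at hsum hΓ
  rw [hΓ] at hsum
  simpa only [ten_mul_gaussWZ_mul_cert] using (hsum.mul_left 10).tsum_eq.symm
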